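/- Let G be a finitely generated group with Cayley graph Γ, admitting a minimal, non-elliptic action without inversions on a simplicial tree T, with every edge stabiliser finitely generated, undistorted in G, and satisfying (∂_M E, G) = ∅. Fix subgraphs Γ(𝔢) ⊆ Γ as in the setup. Then for every Morse gauge N there exists a constant D(N) with the following property: if β ⊆ Γ is an N-Morse geodesic with both endpoints in Γ(𝔢) for some edge 𝔢 of T (resp. in Γ(𝔥) for some halfspace 𝔥), then β is contained in the D(N)-neighbourhood of Γ(𝔢) (resp. of Γ(𝔥)). -/

import Mathlib

/-!
Why the theorem holds. Let `E` be the stabiliser of an edge `𝔢` of `T`. Since `Γ(𝔢)` is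
`E`-cocompact, two points of an `N`-Morse geodesic `β` that lie in `Γ(𝔢)` are uniformly close to
points of `E`. As `E` is undistorted, an `E`-geodesic between the latter, with its two ends moved
onto `β`, is a uniform quasi-geodesic of `Γ` (`exists_connecting_path`), so by the Morse property
it stays uniformly close to `β`. Its consecutive points are uniformly close to each other, so no
stretch of `β` between its ends can be skipped (`near_path_of_close`): `β` between the two given
points is uniformly close to `E` (`near_path_of_morse`), hence to `Γ(𝔢)` (`near_edge_set`).

If instead `β` has its endpoints in `Γ(𝔥)` and `β i ∉ Γ(𝔥)`, then `β` meets `Γ(𝔢)` both before and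
after time `i`, because an edge of `Γ` crossing between `f_p⁻¹(𝔥)` and `f_p⁻¹(𝔥*)` lies in `Γ(𝔢)`.
So `β i` is close to `Γ(𝔢)`, and `Γ(𝔢)` is contained in a bounded neighbourhood of `Γ(𝔥)`, since
the latter is `E`-invariant and nonempty.

The constants depend on the edge only through its `G`-orbit (`StaysClose.smul`), and there are
finitely many orbits of edges (`finite_edge_orbits`): the `G`-translates of the tree paths from `p`
to `s • p`, for `s` in the finite generating set, form a `G`-invariant subtree, which is all of `T`
by minimality.
-/

open Set Filter Topology
open scoped ENNReal

namespace MorseGoG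

/-! ## Metric notions relative to an explicit distance function

Throughout, distances are given by an explicit function `d : X → X → ℝ`, so that the same
notions apply to metric spaces (`d = dist`), to groups with word metrics, and to subgroups
with their own word metrics. -/

variable {X : Type*}

/-- `γ` is a `C`-quasi-geodesic on the parameter set `I ⊆ ℝ` with respect to `d`:
`C ≥ 1` and `|s−t|/C − C ≤ d (γ s) (γ t) ≤ C|s−t| + C` for all `s, t ∈ I`. -/
def IsQG (d : X → X → ℝ) (C : ℝ) (I : Set ℝ) (γ : ℝ → X) : Prop :=
  1 ≤ C ∧ ∀ s ∈ I, ∀ t ∈ I,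
    |s - t| / C - C ≤ d (γ s) (γ t) ∧ d (γ s) (γ t) ≤ C * |s - t| + C

/-- `x` lies in the (closed) `r`-neighbourhood of `A` with respect to `d`. -/
def InNbhd (d : X → X → ℝ) (A : Set X) (r : ℝ) (x : X) : Prop :=
  ∃ a ∈ A, d x a ≤ r

/-- The set `A` (e.g. the image of a quasi-geodesic) is `N`-Morse with respect to `d`:
every `C`-quasi-geodesic segment with endpoints on `A` is contained in the
`N C`-neighbourhood of `A`. -/
def MorseSet (d : X → X → ℝ) (N : ℝ → ℝ) (A : Set X) : Prop :=
  ∀ C : ℝ, 1 ≤ C → ∀ a b : ℝ, a ≤ b → ∀ α : ℝ → X,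
    IsQG d C (Set.Icc a b) α → α a ∈ A → α b ∈ A →
    ∀ t ∈ Set.Icc a b, InNbhd d A (N C) (α t)

/-- `A` is Morse: it is `N`-Morse for some Morse gauge `N`. -/
def IsMorse (d : X → X → ℝ) (A : Set X) : Prop := ∃ N : ℝ → ℝ, MorseSet d N A

/-- A discrete geodesic ray: the sequence of vertices of a geodesic ray in a graph. -/
def IsGeodSeq (d : X → X → ℝ) (γ : ℕ → X) : Prop :=
  ∀ m n : ℕ, d (γ m) (γ n) = |(m : ℝ) - (n : ℝ)|

/-- A discrete geodesic segment of length `n`. -/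
def IsGeodSeg (d : X → X → ℝ) (n : ℕ) (γ : ℕ → X) : Prop :=
  ∀ i ≤ n, ∀ j ≤ n, d (γ i) (γ j) = |(i : ℝ) - (j : ℝ)|

/-- A discrete `C`-quasi-geodesic ray. -/
def IsQGSeq (d : X → X → ℝ) (C : ℝ) (γ : ℕ → X) : Prop :=
  1 ≤ C ∧ ∀ m n : ℕ,
    |(m : ℝ) - n| / C - C ≤ d (γ m) (γ n) ∧ d (γ m) (γ n) ≤ C * |(m : ℝ) - n| + C

/-- Two sets are at finite Hausdorff distance with respect to `d`. -/
def BddHD (d : X → X → ℝ) (A B : Set X) : Prop :=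
  ∃ r : ℝ, (∀ a ∈ A, InNbhd d B r a) ∧ (∀ b ∈ B, InNbhd d A r b)

/-- A discrete edge path with `n` steps: consecutive points are at distance at most `1`
(i.e. equal or joined by an edge, in a graph whose vertex set carries the metric `d`). -/
def IsEdgePath (d : X → X → ℝ) (n : ℕ) (c : ℕ → X) : Prop :=
  ∀ i < n, d (c i) (c (i + 1)) ≤ 1

/-- Combinatorial divergence of a discrete ray `γ` in a graph with vertex distance `d`:
the infimum, over `s ≥ r` and over edge paths joining `γ (s - r)` to `γ (s + r)` and
avoiding the ball of radius `ε·r` around `γ s`, of the length of the path. -/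
noncomputable def gdivergence (d : X → X → ℝ) (γ : ℕ → X) (r : ℕ) (ε : ℝ) : ℝ≥0∞ :=
  ⨅ (s : ℕ) (_ : r ≤ s) (n : ℕ) (c : ℕ → X) (_ : IsEdgePath d n c)
    (_ : c 0 = γ (s - r)) (_ : c n = γ (s + r))
    (_ : ∀ i ≤ n, ε * r < d (c i) (γ s)), (n : ℝ≥0∞)

/-! ## Geodesic metric spaces, geodesic rays, divergence -/

variable {Y : Type*} [MetricSpace Y]

/-- A geodesic metric space: any two points are joined by an isometrically parametrised path. -/
def IsGeodesicSpace (Y : Type*) [MetricSpace Y] : Prop :=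
  ∀ x y : Y, ∃ γ : ℝ → Y, γ 0 = x ∧ γ (dist x y) = y ∧
    ∀ s ∈ Set.Icc 0 (dist x y), ∀ t ∈ Set.Icc 0 (dist x y), dist (γ s) (γ t) = |s - t|

/-- A geodesic ray (defined on `[0,∞)` and extended constantly to negative times). -/
def IsGeodRay (γ : ℝ → Y) : Prop :=
  (∀ s t : ℝ, 0 ≤ s → 0 ≤ t → dist (γ s) (γ t) = |s - t|) ∧ ∀ t : ℝ, γ t = γ (max t 0)

theorem IsGeodRay.lipschitz {γ : ℝ → Y} (h : IsGeodRay γ) : LipschitzWith 1 γ := by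
  apply LipschitzWith.of_dist_le_mul
  intro s t
  rw [h.2 s, h.2 t, h.1 _ _ (le_max_right s 0) (le_max_right t 0)]
  rw [NNReal.coe_one, one_mul, Real.dist_eq]
  exact abs_max_sub_max_le_abs s t 0

/-- Divergence function `δ_γ(r, ε)` of a quasi-geodesic ray `γ` in a metric space:
the infimum of lengths (total variations) of paths connecting `γ (s - r)` to `γ (s + r)`
outside the closed ball `B(γ s, εr)`, over all `s ≥ r`. -/
noncomputable def divergence (γ : ℝ → Y) (r ε : ℝ) : ℝ≥0∞ :=
  ⨅ (s : ℝ) (_ : r ≤ s) (c : ℝ → Y) (_ : ContinuousOn c (Set.Icc 0 1))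
    (_ : c 0 = γ (s - r)) (_ : c 1 = γ (s + r))
    (_ : ∀ t ∈ Set.Icc (0 : ℝ) 1, ε * r < dist (c t) (γ s)),
    eVariationOn c (Set.Icc 0 1)

/-- Quasi-isometric embedding between sets carrying explicit distance functions. -/
def IsQIEmb {Z W : Type*} (dZ : Z → Z → ℝ) (dW : W → W → ℝ) (f : Z → W) : Prop :=
  ∃ C : ℝ, 1 ≤ C ∧ ∀ z z' : Z,
    dZ z z' / C - C ≤ dW (f z) (f z') ∧ dW (f z) (f z') ≤ C * dZ z z' + C

/-! ## The Morse boundary of a proper geodesic metric space -/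

/-- A Morse geodesic ray based at `p` in the metric space `Y`. -/
structure MRay (Y : Type*) [MetricSpace Y] (p : Y) where
  ray : ℝ → Y
  base : ray 0 = p
  geod : IsGeodRay ray
  morse : IsMorse dist (Set.range ray)

/-- Two rays are identified when they are at finite Hausdorff distance. -/
def mrayRel (p : Y) (x y : MRay Y p) : Prop :=
  BddHD dist (Set.range x.ray) (Set.range y.ray)

/-- The Morse boundary of a metric space, as a set: Morse geodesic rays based at `p`,
modulo finite Hausdorff distance. -/
def MorseBoundarySp (Y : Type*) [MetricSpace Y] (p : Y) : Type _ := Quot (mrayRel p)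

/-- The `N`-Morse stratum: `N`-Morse geodesic rays based at `p`. -/
def NRaysSp (Y : Type*) [MetricSpace Y] (p : Y) (N : ℝ → ℝ) : Type _ :=
  {γ : MRay Y p // MorseSet dist N (Set.range γ.ray)}

/-- Each stratum of rays carries the compact-open topology (as a set of continuous maps). -/
noncomputable instance NRaysSp.instTop (p : Y) (N : ℝ → ℝ) : TopologicalSpace (NRaysSp Y p N) :=
  TopologicalSpace.induced
    (fun γ => (⟨γ.1.ray, γ.1.geod.lipschitz.continuous⟩ : C(ℝ, Y))) inferInstance

/-- The Morse boundary carries the direct limit topology over all Morse gauges: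
a set is open iff its intersection with each stratum `∂_M^N Y_p` is open there. -/
noncomputable instance MorseBoundarySp.instTop (p : Y) :
    TopologicalSpace (MorseBoundarySp Y p) :=
  ⨆ N : ℝ → ℝ,
    TopologicalSpace.coinduced (fun γ : NRaysSp Y p N => Quot.mk (mrayRel p) γ.1) inferInstance

/-- The relative Morse boundary `(∂_M Y, f)` of a quasi-isometric embedding `f : Y → X`:
classes of Morse rays of `Y` whose image under `f` is Morse in `X`.  It is a subset of
`∂_M Y` (and carries the subspace topology). -/
def relBoundarySp {Y X : Type*} [MetricSpace Y] [MetricSpace X] (p : Y) (f : Y → X) :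
    Set (MorseBoundarySp Y p) :=
  {ξ | ∃ γ : MRay Y p, Quot.mk (mrayRel p) γ = ξ ∧ IsMorse dist (f '' Set.range γ.ray)}

/-! ## Word metrics and Morse boundaries of finitely generated groups -/

variable {G : Type*} [Group G]

/-- Word length of `g` with respect to the (symmetrised) alphabet `S`. -/
noncomputable def wordLength (S : Set G) (g : G) : ℕ :=
  sInf {n : ℕ | ∃ l : List G, l.length = n ∧ (∀ x ∈ l, x ∈ S ∨ x⁻¹ ∈ S) ∧ l.prod = g}

/-- Word metric on `G` with respect to `S`; this is the distance between vertices in the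
Cayley graph `Cay(G, S)`. -/
noncomputable def wdist (S : Set G) (g h : G) : ℝ := wordLength S (g⁻¹ * h)

/-- A Morse geodesic ray in the Cayley graph of `(G, S)`, based at the identity,
recorded by its sequence of vertices. -/
structure GRay (G : Type*) [Group G] (S : Set G) where
  seq : ℕ → G
  base : seq 0 = 1
  geod : IsGeodSeq (wdist S) seq
  morse : IsMorse (wdist S) (Set.range seq)

/-- Identification of rays at finite Hausdorff distance. -/
def grayRel (S : Set G) (x y : GRay G S) : Prop :=
  BddHD (wdist S) (Set.range x.seq) (Set.range y.seq)

/-- The Morse boundary `∂_M G` of the group `G` with finite generating set `S`. -/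
def MorseBoundary (G : Type*) [Group G] (S : Set G) : Type _ := Quot (grayRel (G := G) S)

/-- The stratum of `N`-Morse rays. -/
def NGRays (G : Type*) [Group G] (S : Set G) (N : ℝ → ℝ) : Type _ :=
  {γ : GRay G S // MorseSet (wdist S) N (Set.range γ.seq)}

/-- The compact-open topology on a stratum: for rays in a graph (vertex sequences) this is
the topology of pointwise convergence of the vertex sequences, `G` being discrete. -/
noncomputable instance NGRays.instTop (S : Set G) (N : ℝ → ℝ) :
    TopologicalSpace (NGRays G S N) :=
  TopologicalSpace.induced (fun γ => γ.1.seq)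
    (@Pi.topologicalSpace ℕ (fun _ => G) (fun _ => ⊥))

/-- The direct limit topology on the Morse boundary of a group. -/
noncomputable instance MorseBoundary.instTop (S : Set G) :
    TopologicalSpace (MorseBoundary G S) :=
  ⨆ N : ℝ → ℝ,
    TopologicalSpace.coinduced (fun γ : NGRays G S N => Quot.mk (grayRel S) γ.1) inferInstance

/-! ## Subgroups: undistortion, relative Morse boundaries -/

/-- `H` is finitely generated and undistorted in `(G, S)`: it has a finite generating set
whose word metric is bi-Lipschitz equivalent (suitably, quasi-isometric) to the metric
induced from `G`. -/
def FGUndistorted (S : Set G) (H : Subgroup G) : Prop :=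
  ∃ T : Finset H, Subgroup.closure (T : Set H) = ⊤ ∧
    ∃ C : ℝ, 1 ≤ C ∧ ∀ h h' : H,
      wdist (T : Set H) h h' ≤ C * wdist S (h : G) (h' : G) + C ∧
      wdist S (h : G) (h' : G) ≤ C * wdist (T : Set H) h h' + C

/-- The relative Morse boundary of `H` in `G` is empty, `(∂_M H, G) = ∅`:
no Morse geodesic ray of `H` (w.r.t. any finite generating set of `H`) remains Morse in `G`. -/
def RelMorseEmpty (S : Set G) (H : Subgroup G) : Prop :=
  ∀ T : Finset H, Subgroup.closure (T : Set H) = ⊤ →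
    ∀ γ : ℕ → H, IsGeodSeq (wdist (T : Set H)) γ →
      IsMorse (wdist (T : Set H)) (Set.range γ) →
      ¬ IsMorse (wdist S) (Set.range fun n => (γ n : G))

/-- The image of the natural injection `(∂_M H, G) ↪ ∂_M G`: those classes in `∂_M G`
having a representative ray staying at bounded distance from `H`. -/
def relBdryImage (S : Set G) (H : Subgroup G) : Set (MorseBoundary G S) :=
  {ξ | ∃ γ : GRay G S, Quot.mk (grayRel S) γ = ξ ∧
        ∃ r : ℝ, ∀ n : ℕ, ∃ h ∈ H, wdist S (γ.seq n) h ≤ r}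

/-- The relative Morse boundary `(∂_M H, G)` as a subset of `∂_M H` (where `∂_M H` is
formed w.r.t. a generating set `T` of `H`): classes of rays that remain Morse in `G`. -/
def relBdryIn (S : Set G) (H : Subgroup G) (T : Set H) : Set (MorseBoundary H T) :=
  {ξ | ∃ γ : GRay H T, Quot.mk (grayRel T) γ = ξ ∧
        IsMorse (wdist S) (Set.range fun n => (γ.seq n : G))}

/-- Specification of the natural map `∂_M H → ∂_M G` (or of its restriction to the relative
boundary): each class is sent to the class of a ray of `G` at finite Hausdorff distance
from the image of (a representative of) the given class. -/
def InclSpec (S : Set G) (H : Subgroup G) (TH : Set H)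
    (F : MorseBoundary H TH → MorseBoundary G S) : Prop :=
  ∀ γ : GRay H TH, ∀ β : GRay G S,
    Quot.mk (grayRel S) β = F (Quot.mk (grayRel TH) γ) →
    BddHD (wdist S) (Set.range fun n => ((γ.seq n : G))) (Set.range β.seq)

/-! ## Asymptotic cones and relatively wide subgroups -/

/-- Admissible sequences for an asymptotic cone: sequences at bounded rescaled distance
from the basepoints `o`. -/
def conePts (ω : Ultrafilter ℕ) (d : X → X → ℝ) (o : ℕ → X) (s : ℕ → ℝ) : Set (ℕ → X) :=
  {x | ∃ B : ℝ, ∀ᶠ n in (ω : Filter ℕ), d (o n) (x n) ≤ B * s n}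

/-- The pseudo-distance of the asymptotic cone: ultralimit of the rescaled distances. -/
noncomputable def coneDist (ω : Ultrafilter ℕ) (d : X → X → ℝ) (s : ℕ → ℝ)
    (x y : ℕ → X) : ℝ :=
  limUnder (ω : Filter ℕ) (fun n => d (x n) (y n) / s n)

/-- The topology of the asymptotic cone, as a topology on representative sequences:
generated by the open balls of the cone pseudo-distance. -/
noncomputable def coneTop (ω : Ultrafilter ℕ) (d : X → X → ℝ) (o : ℕ → X) (s : ℕ → ℝ) :
    TopologicalSpace (ℕ → X) :=
  TopologicalSpace.generateFrom
    {U | ∃ c ∈ conePts ω d o s, ∃ ε : ℝ, 0 < ε ∧ U = {x | coneDist ω d s c x < ε}}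

/-- `z` is a cut point of the asymptotic cone separating the points `x` and `y`:
`x, y` differ from `z` and do not lie in a common connected subset of the complement
of (the point represented by) `z`. -/
def ConeSeparates (ω : Ultrafilter ℕ) (d : X → X → ℝ) (o : ℕ → X) (s : ℕ → ℝ)
    (x y z : ℕ → X) : Prop :=
  coneDist ω d s x z ≠ 0 ∧ coneDist ω d s y z ≠ 0 ∧
  ¬ ∃ A : Set (ℕ → X),
      A ⊆ {w ∈ conePts ω d o s | coneDist ω d s w z ≠ 0} ∧ x ∈ A ∧ y ∈ A ∧
      @IsPreconnected (ℕ → X) (coneTop ω d o s) A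

/-- `H` is relatively wide in `(G, S)`: in every asymptotic cone of `G` (over a
non-principal ultrafilter, arbitrary basepoints and scaling factors tending to infinity),
no two limit points of `H` are separated by a cut point. -/
def RelativelyWide (S : Set G) (H : Subgroup G) : Prop :=
  ∀ ω : Ultrafilter ℕ, (ω : Filter ℕ) ≤ Filter.cofinite →
  ∀ (o : ℕ → G) (s : ℕ → ℝ), (∀ n, 0 < s n) → Tendsto s atTop atTop →
  ∀ x y z : ℕ → G, (∀ n, x n ∈ H) → (∀ n, y n ∈ H) →
    x ∈ conePts ω (wdist S) o s → y ∈ conePts ω (wdist S) o s →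
    z ∈ conePts ω (wdist S) o s →
    ¬ ConeSeparates ω (wdist S) o s x y z

/-- The subgroup `H ≤ V` is relatively wide in `V` (for any, equivalently some, finite
generating set of `V`). -/
def RelWideIn (V H : Subgroup G) : Prop :=
  ∀ SV : Finset V, Subgroup.closure (SV : Set V) = ⊤ →
    RelativelyWide (SV : Set V) (H.subgroupOf V)

/-! ## Actions on simplicial trees -/

variable {VT : Type*}

/-- `G` splits as a graph of groups: it acts on the simplicial tree `T`
(preserving adjacency), minimally, non-elliptically and without inversions. -/
def ActsOnTree (G : Type*) [Group G] {VT : Type*} (T : SimpleGraph VT) [MulAction G VT] :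
    Prop :=
  T.IsTree ∧
  (∀ (g : G) (a b : VT), T.Adj a b → T.Adj (g • a) (g • b)) ∧
  (∀ (g : G) (a b : VT), T.Adj a b → ¬(g • a = b ∧ g • b = a)) ∧
  (¬ ∃ v : VT, ∀ g : G, g • v = v) ∧
  (∀ W : Set VT, W.Nonempty → (∀ (g : G), ∀ v ∈ W, g • v ∈ W) →
    (∀ a ∈ W, ∀ b ∈ W, ∀ c : VT, T.dist a c + T.dist c b = T.dist a b → c ∈ W) →
    W = Set.univ)

/-- The stabiliser of the edge `{a, b}` (pointwise; for actions without inversions this is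
the full edge stabiliser). -/
def edgeStab (G : Type*) [Group G] {VT : Type*} [MulAction G VT] (a b : VT) : Subgroup G :=
  MulAction.stabilizer G a ⊓ MulAction.stabilizer G b

/-- The halfspace determined by the edge `{a, b}` containing `b`: one of the two connected
components of the complement of the open edge. -/
def halfspace {VT : Type*} (T : SimpleGraph VT) (a b : VT) : Set VT :=
  {v | T.dist v b < T.dist v a}

end MorseGoG

namespace MorseGoG

variable {G : Type*} [Group G] {VT : Type*}

/-- A choice of "edge subgraphs" `Γ(𝔢) ⊆ Γ` of the Cayley graph `Γ = Cay(G, S)`, one for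
each (unoriented) edge of the tree `T`, recorded by its vertex set `A a b ⊆ G`,
satisfying the properties of Lemma 3.2 (`AIS lem`).  Here `p` is the fixed base vertex of
`T` and `f_p(g) = g • p` is the orbit map. -/
structure EdgeSubgraphs (G : Type*) [Group G] (S : Set G) {VT : Type*} (T : SimpleGraph VT)
    [MulAction G VT] (p : VT) where
  /-- the vertex set of `Γ(𝔢)` for the edge `𝔢 = {a, b}` -/
  A : VT → VT → Set G
  /-- `Γ(𝔢)` only depends on the unoriented edge -/
  symm : ∀ a b : VT, A a b = A b a
  /-- (1) `Γ(𝔢)` is connected -/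
  conn : ∀ a b : VT, T.Adj a b → ∀ x ∈ A a b, ∀ y ∈ A a b,
    ∃ (n : ℕ) (c : ℕ → G), IsEdgePath (wdist S) n c ∧ c 0 = x ∧ c n = y ∧
      ∀ i ≤ n, c i ∈ A a b
  /-- (1) `Γ(𝔢)` is `G_𝔢`-invariant -/
  inva : ∀ a b : VT, T.Adj a b → ∀ g ∈ edgeStab G a b, ∀ x ∈ A a b, g * x ∈ A a b
  /-- (1) `Γ(𝔢)` is `G_𝔢`-cocompact -/
  cocpt : ∀ a b : VT, T.Adj a b →
    ∃ F : Finset G, ∀ x ∈ A a b, ∃ g ∈ edgeStab G a b, ∃ f ∈ F, x = g * f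
  /-- (2) equivariance: `Γ(g𝔢) = gΓ(𝔢)` -/
  equivariant : ∀ (g : G) (a b : VT), A (g • a) (g • b) = (fun x => g * x) '' A a b
  /-- (3) `Γ(𝔢)` contains every edge of `Γ` with one endpoint in `f_p⁻¹(𝔥)` and the other
  in `f_p⁻¹(𝔥*)` -/
  crossing : ∀ a b : VT, T.Adj a b → ∀ x y : G, wdist S x y = 1 →
    x • p ∈ halfspace T a b → y • p ∈ halfspace T b a → x ∈ A a b ∧ y ∈ A a b
  /-- (4) `N(f_p⁻¹(𝔥), r) ∩ N(f_p⁻¹(𝔥*), r) ⊆ N(Γ(𝔢), r)` -/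
  nbhd : ∀ a b : VT, T.Adj a b → ∀ r : ℝ, 0 ≤ r → ∀ x : G,
    (∃ y : G, y • p ∈ halfspace T a b ∧ wdist S x y ≤ r) →
    (∃ y : G, y • p ∈ halfspace T b a ∧ wdist S x y ≤ r) →
    ∃ z ∈ A a b, wdist S x z ≤ r
  /-- (5) each edge of `Γ` lies in `Γ(𝔢)` for only finitely many edges `𝔢` of `T` -/
  finmany : ∀ x y : G, wdist S x y = 1 →
    {e : VT × VT | T.Adj e.1 e.2 ∧ x ∈ A e.1 e.2 ∧ y ∈ A e.1 e.2}.Finite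

/-- The vertex set of `Γ(𝔥)` for the halfspace `𝔥` of the edge `{a,b}` containing `b`:
`f_p⁻¹(𝔥) ∖ Γ(𝔢)`. -/
def hsVerts (T : SimpleGraph VT) [MulAction G VT] (p : VT)
    (A : VT → VT → Set G) (a b : VT) : Set G :=
  {g : G | g • p ∈ halfspace T a b ∧ g ∉ A a b}

/-- `M(𝔥) ⊆ ∂_M G`: classes of rays eventually contained in `Γ(𝔥)`, for the halfspace `𝔥`
of the edge `{a,b}` containing `b`. -/
def Mset (S : Set G) (T : SimpleGraph VT) [MulAction G VT] (p : VT)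
    (A : VT → VT → Set G) (a b : VT) : Set (MorseBoundary G S) :=
  {ξ | ∃ γ : GRay G S, Quot.mk (grayRel S) γ = ξ ∧
        ∃ n₀ : ℕ, ∀ n ≥ n₀, γ.seq n ∈ hsVerts T p A a b}

end MorseGoG

namespace MorseGoG

/-! ### Word metrics -/

section WordMetric

variable {G : Type*} [Group G] {S : Set G}

lemma wordLength_le (l : List G) (hl : ∀ x ∈ l, x ∈ S ∨ x⁻¹ ∈ S) :
    wordLength S l.prod ≤ l.length :=
  Nat.sInf_le ⟨l, rfl, hl, rfl⟩

lemma exists_word (hS : Subgroup.closure S = ⊤) (g : G) :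
    ∃ l : List G, l.length = wordLength S g ∧ (∀ x ∈ l, x ∈ S ∨ x⁻¹ ∈ S) ∧ l.prod = g := by
  have hg : g ∈ Subgroup.closure S := by rw [hS]; trivial
  have hne : {n : ℕ | ∃ l : List G, l.length = n ∧ (∀ x ∈ l, x ∈ S ∨ x⁻¹ ∈ S) ∧
      l.prod = g}.Nonempty := by
    induction hg using Subgroup.closure_induction with
    | mem x hx => exact ⟨1, [x], rfl, by simpa using Or.inl hx, by simp⟩
    | one => exact ⟨0, [], rfl, by simp, by simp⟩
    | mul x y _ _ ihx ihy =>
      obtain ⟨_, l, rfl, hl, rfl⟩ := ihx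
      obtain ⟨_, l', rfl, hl', rfl⟩ := ihy
      refine ⟨_, l ++ l', rfl, ?_, by simp⟩
      intro x hx
      rcases List.mem_append.1 hx with h | h
      exacts [hl x h, hl' x h]
    | inv x _ ihx =>
      obtain ⟨_, l, rfl, hl, rfl⟩ := ihx
      refine ⟨_, (l.map (·⁻¹)).reverse, rfl, ?_, by rw [List.prod_inv_reverse]⟩
      intro x hx
      simp only [List.mem_reverse, List.mem_map] at hx
      obtain ⟨y, hy, rfl⟩ := hx
      rw [inv_inv]
      exact (hl y hy).symm
  exact Nat.sInf_mem hne

lemma wordLength_one : wordLength S (1 : G) = 0 := by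
  have := wordLength_le (S := S) [] (by simp)
  simpa using this

lemma wordLength_mul (hS : Subgroup.closure S = ⊤) (g h : G) :
    wordLength S (g * h) ≤ wordLength S g + wordLength S h := by
  obtain ⟨l, hl, hlS, rfl⟩ := exists_word hS g
  obtain ⟨l', hl', hlS', rfl⟩ := exists_word hS h
  rw [← hl, ← hl', ← List.prod_append, ← List.length_append]
  apply wordLength_le
  intro x hx
  rcases List.mem_append.1 hx with h | h
  exacts [hlS x h, hlS' x h]

lemma wordLength_inv_le (hS : Subgroup.closure S = ⊤) (g : G) :
    wordLength S g⁻¹ ≤ wordLength S g := by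
  obtain ⟨l, hl, hlS, rfl⟩ := exists_word hS g
  rw [← hl, List.prod_inv_reverse]
  refine (wordLength_le _ ?_).trans (by simp)
  intro x hx
  simp only [List.mem_reverse, List.mem_map] at hx
  obtain ⟨y, hy, rfl⟩ := hx
  rw [inv_inv]
  exact (hlS y hy).symm

lemma wdist_nonneg (g h : G) : 0 ≤ wdist S g h := Nat.cast_nonneg _

lemma wdist_self (g : G) : wdist S g g = 0 := by
  simp [wdist, wordLength_one]

lemma wdist_comm (hS : Subgroup.closure S = ⊤) (g h : G) : wdist S g h = wdist S h g := by
  have key : ∀ g h : G, wdist S g h ≤ wdist S h g := fun g h => by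
    have := wordLength_inv_le hS (h⁻¹ * g)
    rw [mul_inv_rev, inv_inv] at this
    exact Nat.cast_le.2 this
  exact le_antisymm (key g h) (key h g)

lemma wdist_triangle (hS : Subgroup.closure S = ⊤) (g h k : G) :
    wdist S g k ≤ wdist S g h + wdist S h k := by
  have := wordLength_mul hS (g⁻¹ * h) (h⁻¹ * k)
  rw [show g⁻¹ * h * (h⁻¹ * k) = g⁻¹ * k by group] at this
  unfold wdist
  exact_mod_cast this

lemma wdist_mul_left (k g h : G) : wdist S (k * g) (k * h) = wdist S g h := by
  simp only [wdist, mul_inv_rev]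
  congr 2
  group

lemma exists_geodSeg (hS : Subgroup.closure S = ⊤) (g h : G) :
    ∃ (m : ℕ) (e : ℕ → G), e 0 = g ∧ e m = h ∧ IsGeodSeg (wdist S) m e := by
  obtain ⟨l, hl, hlS, hprod⟩ := exists_word hS (g⁻¹ * h)
  have hup : ∀ i j, i ≤ j →
      wdist S (g * (l.take i).prod) (g * (l.take j).prod) ≤ (j : ℝ) - i := by
    intro i j hij
    rw [wdist_mul_left]
    have h1 : (l.take i).prod⁻¹ * (l.take j).prod = ((l.drop i).take (j - i)).prod := by
      obtain ⟨k, rfl⟩ := Nat.exists_eq_add_of_le hij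
      rw [List.take_add, List.prod_append]
      simp
    have h2 : wordLength S ((l.drop i).take (j - i)).prod ≤ j - i := by
      refine (wordLength_le _ ?_).trans (List.length_take_le _ _)
      intro x hx
      exact hlS x (List.mem_of_mem_drop (List.mem_of_mem_take hx))
    rw [wdist, h1, ← Nat.cast_sub hij]
    exact_mod_cast h2
  have h0 : g * (l.take 0).prod = g := by simp
  have hm : g * (l.take l.length).prod = h := by rw [List.take_length, hprod]; group
  have hEq : ∀ i j, i ≤ j → j ≤ l.length →
      wdist S (g * (l.take i).prod) (g * (l.take j).prod) = (j : ℝ) - i := by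
    intro i j hij hj
    -- The lower bound: otherwise the detour through the two points would be too short.
    refine le_antisymm (hup i j hij) ?_
    have a1 := hup 0 i (Nat.zero_le _)
    have a2 := hup j l.length hj
    have a3 : wdist S g h = l.length := by rw [wdist, hl]
    rw [h0] at a1
    rw [hm] at a2
    have t1 := wdist_triangle hS g (g * (l.take i).prod) h
    have t2 := wdist_triangle hS (g * (l.take i).prod) (g * (l.take j).prod) h
    push_cast at a1
    linarith
  refine ⟨l.length, fun i => g * (l.take i).prod, h0, hm, ?_⟩
  intro i hi j hj
  rcases le_total i j with hij | hij
  · have : (i : ℝ) ≤ j := Nat.cast_le.2 hij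
    rw [hEq i j hij hj, abs_sub_comm, abs_of_nonneg (by linarith)]
  · have : (j : ℝ) ≤ i := Nat.cast_le.2 hij
    rw [wdist_comm hS, hEq j i hij hi, abs_of_nonneg (by linarith)]

end WordMetric

/-! ### Morse geodesics and coarse paths joining two of their points -/

/-- A coarse path `α` with jumps at most `J`, all of whose points are `R`-close to a geodesic `c`,
and which joins `c j` to `c k`, passes within `3R + J` of every point of `c` in between. -/
lemma near_path_of_close {G : Type*} [Group G] {S : Set G} (hS : Subgroup.closure S = ⊤)
    {n : ℕ} {c : ℕ → G} (hc : IsGeodSeg (wdist S) n c) {R J : ℝ}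
    (hJ : 0 ≤ J) {m : ℕ} {α : ℕ → G}
    (hα : ∀ l ≤ m, InNbhd (wdist S) (c '' Set.Iic n) R (α l))
    (hjump : ∀ l < m, wdist S (α l) (α (l + 1)) ≤ J)
    {j i k : ℕ} (hji : j ≤ i) (hik : i ≤ k) (hk : k ≤ n) (h0 : α 0 = c j) (hm : α m = c k) :
    ∃ l ≤ m, wdist S (c i) (α l) ≤ 3 * R + J := by
  have hR : 0 ≤ R := by
    obtain ⟨_, _, h⟩ := hα 0 (Nat.zero_le _)
    exact (wdist_nonneg _ _).trans h
  by_cases hP : ∃ u ≤ i, wdist S (α m) (c u) ≤ R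
  · obtain ⟨u, hu, hur⟩ := hP
    refine ⟨m, le_rfl, ?_⟩
    rw [hm, hc k hk u (by omega)] at hur
    rw [hm, hc i (by omega) k hk]
    have h1 : (u : ℝ) ≤ i := Nat.cast_le.2 hu
    have h2 : (i : ℝ) ≤ k := Nat.cast_le.2 hik
    rw [abs_of_nonneg (by linarith)] at hur
    rw [abs_sub_comm, abs_of_nonneg (by linarith)]
    linarith
  · -- The last time at which the path is close to the part of `c` before `i`.
    obtain ⟨l, hl, ⟨u, hu, hur⟩, hnot⟩ : ∃ l < m, (∃ u ≤ i, wdist S (α l) (c u) ≤ R) ∧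
        ¬ ∃ u ≤ i, wdist S (α (l + 1)) (c u) ≤ R := by
      by_contra! hcon
      apply hP
      have : ∀ l ≤ m, ∃ u ≤ i, wdist S (α l) (c u) ≤ R := by
        intro l
        induction l with
        | zero => intro _; exact ⟨j, hji, by rw [h0, wdist_self]; exact hR⟩
        | succ l ih => intro h; exact hcon l (by omega) (ih (by omega))
      exact this m le_rfl
    obtain ⟨_, ⟨v, hv, rfl⟩, hvr⟩ := hα (l + 1) (by omega)
    have hv' : v ≤ n := hv
    have hiv : i < v := by
      by_contra h
      exact hnot ⟨v, by omega, hvr⟩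
    refine ⟨l, hl.le, ?_⟩
    have h1 : (u : ℝ) ≤ i := Nat.cast_le.2 hu
    have h2 : (i : ℝ) ≤ v := Nat.cast_le.2 hiv.le
    have t1 := wdist_triangle hS (c u) (α l) (c v)
    have t2 := wdist_triangle hS (α l) (α (l + 1)) (c v)
    have t3 := wdist_triangle hS (c i) (c u) (α l)
    have hj := hjump l hl
    rw [wdist_comm hS (c u) (α l)] at t1 t3
    rw [hc u (by omega) v hv', abs_sub_comm, abs_of_nonneg (by linarith)] at t1
    rw [hc i (by omega) u (by omega), abs_of_nonneg (by linarith)] at t3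
    linarith

/-- A geodesic `e` of a subgroup whose inclusion is a `C₀`-quasi-isometric embedding, with its ends
moved by at most `r` to `x` and `y`, is a quasi-geodesic of the ambient group. It is parametrised
by `[0, m + 1]`, where `m` is the length of `e`, so that the two ends are distinct parameters even
for `m = 0`. -/
lemma exists_connecting_path {G : Type*} [Group G] {S : Set G} (hS : Subgroup.closure S = ⊤)
    {E : Subgroup G} {dE : E → E → ℝ} {C₀ r : ℝ} (hC₀ : 1 ≤ C₀) (hr : 0 ≤ r)
    (hE : ∀ h h' : E, dE h h' ≤ C₀ * wdist S (h : G) (h' : G) + C₀ ∧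
      wdist S (h : G) (h' : G) ≤ C₀ * dE h h' + C₀)
    {m : ℕ} {e : ℕ → E} (he : IsGeodSeg dE m e) {x y : G}
    (hx : wdist S x (e 0) ≤ r) (hy : wdist S y (e m) ≤ r) :
    ∃ α : ℝ → G, α 0 = x ∧ α (m + 1) = y ∧
      IsQG (wdist S) (3 * C₀ + 2 * r) (Set.Icc 0 (m + 1)) α ∧
      ∀ t ∈ Set.Icc (0 : ℝ) (m + 1), ∃ h : E, wdist S (α t) h ≤ r := by
  classical
  have hm0 : (0 : ℝ) ≤ m := Nat.cast_nonneg m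
  set α : ℝ → G := fun t => if t ≤ 0 then x else if (m : ℝ) + 1 ≤ t then y else e ⌊t⌋₊ with hαdef
  have hnear : ∀ t ∈ Set.Icc (0 : ℝ) (m + 1),
      ∃ i ≤ m, wdist S (α t) (e i) ≤ r ∧ (i : ℝ) ≤ t ∧ t ≤ i + 1 := by
    intro t ht
    by_cases h1 : t ≤ 0
    · refine ⟨0, Nat.zero_le _, ?_, ?_, ?_⟩
      · simp only [hαdef, h1, if_true]; exact hx
      · simpa using ht.1
      · push_cast; linarith
    · by_cases h2 : (m : ℝ) + 1 ≤ t
      · refine ⟨m, le_rfl, ?_, by linarith, ht.2⟩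
        simp only [hαdef, h1, h2, if_true, if_false]; exact hy
      · refine ⟨⌊t⌋₊, ?_, ?_, Nat.floor_le ht.1, (Nat.lt_floor_add_one t).le⟩
        · have : ⌊t⌋₊ < m + 1 := (Nat.floor_lt ht.1).2 (by push_cast; linarith)
          omega
        · simp only [hαdef, h1, h2, if_false]
          rw [wdist_self]; exact hr
  refine ⟨α, by simp [hαdef], ?_, ⟨by linarith, ?_⟩, ?_⟩
  · have : ¬ ((m : ℝ) + 1 ≤ 0) := by linarith
    simp [hαdef, this]
  · intro s hs t ht
    obtain ⟨i, hi, hsi, hi1, hi2⟩ := hnear s hs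
    obtain ⟨j, hj, htj, hj1, hj2⟩ := hnear t ht
    obtain ⟨q1, q2⟩ := hE (e i) (e j)
    rw [he i hi j hj] at q1 q2
    -- The integer parameters differ from the real ones by at most `1`.
    have u1 : |(i : ℝ) - j| ≤ |s - t| + 1 := by
      rw [abs_le]
      constructor <;> cases abs_cases (s - t) <;> linarith
    have u2 : |s - t| ≤ |(i : ℝ) - j| + 1 := by
      rw [abs_le]
      constructor <;> cases abs_cases ((i : ℝ) - j) <;> linarith
    have t1 := wdist_triangle hS (α s) (e i) (α t)
    have t2 := wdist_triangle hS (e i : G) (e j) (α t)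
    have t3 := wdist_triangle hS (e i : G) (α s) (e j)
    have t4 := wdist_triangle hS (α s) (α t) (e j)
    rw [wdist_comm hS (e j : G) (α t)] at t2
    rw [wdist_comm hS (e i : G) (α s)] at t3
    have habs := abs_nonneg (s - t)
    constructor
    · have hdiv : |s - t| / (3 * C₀ + 2 * r) ≤ |s - t| / C₀ :=
        div_le_div_of_nonneg_left habs (by linarith) (by linarith)
      have hdiv2 : |s - t| / C₀ ≤ wdist S (e i : G) (e j) + 2 := by
        rw [div_le_iff₀ (by linarith)]
        nlinarith
      linarith
    · have : C₀ * |(i : ℝ) - j| ≤ C₀ * (|s - t| + 1) :=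
        mul_le_mul_of_nonneg_left u1 (by linarith)
      have : C₀ * |s - t| ≤ (3 * C₀ + 2 * r) * |s - t| :=
        mul_le_mul_of_nonneg_right (by linarith) habs
      linarith
  · intro t ht
    obtain ⟨i, -, h, -⟩ := hnear t ht
    exact ⟨e i, h⟩

/-- If an undistorted subgroup `E` is `r`-close to two points of an `N`-Morse geodesic, then it is
uniformly close to the part of the geodesic between these points. -/
lemma near_path_of_morse {G : Type*} [Group G] {S : Set G} (hS : Subgroup.closure S = ⊤)
    {E : Subgroup G} (hE : FGUndistorted S E) (N : ℝ → ℝ) {r : ℝ} (hr : 0 ≤ r) :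
    ∃ D : ℝ, ∀ (n : ℕ) (c : ℕ → G), IsGeodSeg (wdist S) n c →
      MorseSet (wdist S) N (c '' Set.Iic n) → ∀ j i k : ℕ, j ≤ i → i ≤ k → k ≤ n →
      InNbhd (wdist S) (E : Set G) r (c j) → InNbhd (wdist S) (E : Set G) r (c k) →
      InNbhd (wdist S) (E : Set G) D (c i) := by
  obtain ⟨TE, hTE, C₀, hC₀, hq⟩ := hE
  set C := 3 * C₀ + 2 * r with hC
  refine ⟨3 * N C + 2 * C + r, ?_⟩
  rintro n c hc hM j i k hji hik hk ⟨x, hxE, hx⟩ ⟨y, hyE, hy⟩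
  obtain ⟨m, e, he0, hem, he⟩ := exists_geodSeg hTE (⟨x, hxE⟩ : E) ⟨y, hyE⟩
  obtain ⟨α, hα0, hαm, hαq, hαE⟩ := exists_connecting_path hS hC₀ hr hq he
    (x := c j) (y := c k) (by rw [he0]; exact hx) (by rw [hem]; exact hy)
  have hm0 : (0 : ℝ) ≤ m := Nat.cast_nonneg m
  have hmem : ∀ l ≤ m + 1, (l : ℝ) ∈ Set.Icc (0 : ℝ) (m + 1) := fun l hl =>
    ⟨Nat.cast_nonneg l, by exact_mod_cast hl⟩
  have hclose := hM C (by linarith) 0 (m + 1) (by linarith) α hαq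
    ⟨j, show j ≤ n by omega, hα0.symm⟩ ⟨k, hk, hαm.symm⟩
  obtain ⟨l, hl, hli⟩ := near_path_of_close hS hc (R := N C) (J := 2 * C) (by linarith)
    (m := m + 1) (α := fun l => α (l : ℝ)) (fun l hl => hclose l (hmem l hl))
    (fun l hl => by
      have := (hαq.2 l (hmem l (by omega)) (l + 1 : ℕ) (hmem _ (by omega))).2
      push_cast at this
      rw [show (l : ℝ) - (l + 1) = -1 by ring, abs_neg, abs_one] at this
      push_cast
      linarith)
    hji hik hk (by simpa using hα0) (by simpa using hαm)
  obtain ⟨h, hh⟩ := hαE l (hmem l hl)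
  refine ⟨h, h.2, ?_⟩
  have := wdist_triangle hS (c i) (α l) h
  linarith

/-! ### The action on the tree -/

section Tree

variable {G VT : Type*} [Group G] [MulAction G VT] {T : SimpleGraph VT}

lemma dist_smul_le (hT : T.Connected)
    (hadj : ∀ (g : G) (a b : VT), T.Adj a b → T.Adj (g • a) (g • b)) (g : G) (u v : VT) :
    T.dist (g • u) (g • v) ≤ T.dist u v := by
  obtain ⟨w, hw⟩ := hT.exists_walk_length_eq_dist u v
  let f : T →g T := ⟨fun x => g • x, fun h => hadj g _ _ h⟩
  have := SimpleGraph.dist_le (w.map f)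
  rw [SimpleGraph.Walk.length_map, hw] at this
  exact this

lemma dist_smul (hT : T.Connected)
    (hadj : ∀ (g : G) (a b : VT), T.Adj a b → T.Adj (g • a) (g • b)) (g : G) (u v : VT) :
    T.dist (g • u) (g • v) = T.dist u v := by
  refine le_antisymm (dist_smul_le hT hadj g u v) ?_
  have := dist_smul_le hT hadj g⁻¹ (g • u) (g • v)
  rwa [inv_smul_smul, inv_smul_smul] at this

lemma smul_mem_halfspace_smul (hT : T.Connected)
    (hadj : ∀ (g : G) (a b : VT), T.Adj a b → T.Adj (g • a) (g • b)) (g : G) (a b v : VT) :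
    g • v ∈ halfspace T (g • a) (g • b) ↔ v ∈ halfspace T a b := by
  simp only [halfspace, Set.mem_ofPred_eq, dist_smul hT hadj]

lemma mem_halfspace_or (hT : T.IsTree) {a b : VT} (hab : T.Adj a b) (v : VT) :
    v ∈ halfspace T a b ∨ v ∈ halfspace T b a := by
  have := hT.dist_ne_of_adj v hab
  simp only [halfspace, Set.mem_ofPred_eq]
  omega

/-- A subgraph of a tree contains every geodesic of the tree between two of its points that are
connected inside the subgraph. -/
lemma reachable_of_between (hT : T.IsTree) {H : SimpleGraph VT} (hle : H ≤ T) {a b c : VT}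
    (hab : H.Reachable a b) (hc : T.dist a c + T.dist c b = T.dist a b) : H.Reachable a c := by
  classical
  obtain ⟨w, hw⟩ := hab.exists_isPath
  obtain ⟨w₁, hw₁⟩ := hT.connected.exists_walk_length_eq_dist a c
  obtain ⟨w₂, hw₂⟩ := hT.connected.exists_walk_length_eq_dist c b
  have hpath : (w₁.append w₂).IsPath := by
    apply SimpleGraph.Walk.isPath_of_length_eq_dist
    rw [SimpleGraph.Walk.length_append, hw₁, hw₂, hc]
  have heq : w.mapLe hle = w₁.append w₂ :=
    (hT.existsUnique_path a b).unique (hw.mapLe hle) hpath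
  have hmem : c ∈ (w.mapLe hle).support := by
    rw [heq, SimpleGraph.Walk.mem_support_append_iff]
    exact Or.inl w₁.end_mem_support
  rw [SimpleGraph.Walk.support_mapLe_eq_support] at hmem
  exact ⟨w.takeUntil c hmem⟩

/-- An edge of a tree belongs to every subgraph that connects its ends, being the unique path between
them. -/
lemma adj_of_reachable (hT : T.IsTree) {H : SimpleGraph VT} (hle : H ≤ T) {a b : VT}
    (hab : H.Reachable a b) (hadj : T.Adj a b) : H.Adj a b := by
  obtain ⟨w, hw⟩ := hab.exists_isPath
  have heq : w.mapLe hle = hadj.toWalk :=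
    (hT.existsUnique_path a b).unique (hw.mapLe hle) (by simp [hadj.ne])
  have hlen : w.length = 1 := by
    have := congrArg SimpleGraph.Walk.length heq
    simpa using this
  exact SimpleGraph.Walk.adj_of_length_eq_one hlen

/-- A minimal action of a finitely generated group on a tree has finitely many orbits of edges:
every edge has a translate with both ends in a fixed finite set. -/
lemma finite_edge_orbits (S : Finset G) (hS : Subgroup.closure (S : Set G) = ⊤)
    (hact : ActsOnTree G T) (p : VT) :
    ∃ F : Set VT, F.Finite ∧ ∀ a b : VT, T.Adj a b → ∃ g : G, g • a ∈ F ∧ g • b ∈ F := by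
  obtain ⟨hT, hadj, -, -, hmin⟩ := hact
  let w : ∀ s : G, T.Walk p (s • p) := fun s => (hT.connected p (s • p)).some
  let F : Set VT := ⋃ s ∈ S, {v | v ∈ (w s).support}
  have hF : F.Finite := S.finite_toSet.biUnion fun s _ => (w s).support.finite_toSet
  -- The edges of `T` having a translate with both ends on the paths `w s`.
  let H : SimpleGraph VT :=
    { Adj := fun x y => T.Adj x y ∧ ∃ g : G, g • x ∈ F ∧ g • y ∈ F
      symm := ⟨fun x y ⟨h, g, h1, h2⟩ => ⟨h.symm, g, h2, h1⟩⟩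
      loopless := ⟨fun x h => h.1.ne rfl⟩ }
  have hle : H ≤ T := fun x y h => h.1
  have hHsmul : ∀ (g : G) {x y : VT}, H.Reachable x y → H.Reachable (g • x) (g • y) := by
    intro g x y h
    let f : H →g H := ⟨fun x => g • x, fun {x y} h =>
      ⟨hadj g _ _ h.1, h.2.choose * g⁻¹, by simpa [mul_smul] using h.2.choose_spec⟩⟩
    exact h.map f
  have hgen : ∀ s ∈ S, H.Reachable p (s • p) := by
    intro s hs
    have hsup : ∀ {x y : VT} (q : T.Walk x y), (∀ v ∈ q.support, v ∈ F) → H.Reachable x y := by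
      intro x y q
      induction q with
      | nil => intro _; rfl
      | @cons x u y h q ih =>
        intro hq
        have hu : u ∈ F := hq u (by simp)
        have hx : x ∈ F := hq x (by simp)
        have hxu : H.Adj x u := ⟨h, 1, by simpa using hx, by simpa using hu⟩
        exact hxu.reachable.trans (ih fun v hv => hq v (by simp [hv]))
    exact hsup (w s) fun v hv => Set.mem_biUnion (x := s) hs hv
  have horb : ∀ g : G, H.Reachable p (g • p) := by
    intro g
    have hg : g ∈ Subgroup.closure (S : Set G) := by rw [hS]; trivial
    induction hg using Subgroup.closure_induction with
    | mem x hx => exact hgen x hx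
    | one => rw [one_smul]
    | mul x y _ _ ihx ihy => rw [mul_smul]; exact ihx.trans (hHsmul x ihy)
    | inv x _ ihx =>
      have := hHsmul x⁻¹ ihx
      rw [inv_smul_smul] at this
      exact this.symm
  have huniv : {v | H.Reachable p v} = Set.univ := by
    refine hmin _ ⟨p, SimpleGraph.Reachable.refl p⟩ ?_ ?_
    · intro g v hv
      exact (horb g).trans (hHsmul g hv)
    · intro a ha b hb c hc
      exact ha.trans (reachable_of_between hT hle (ha.symm.trans hb) hc)
  have hreach : ∀ v, H.Reachable p v := fun v => by
    have : v ∈ {v | H.Reachable p v} := by rw [huniv]; trivial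
    exact this
  exact ⟨F, hF, fun a b hab =>
    (adj_of_reachable hT hle ((hreach a).symm.trans (hreach b)) hab).2⟩

end Tree

/-! ### Geodesics and the edge subgraphs -/

section Edge

variable {G VT : Type*} [Group G] [MulAction G VT] {S : Set G} {T : SimpleGraph VT} {p : VT}

/-- `D` is a constant as sought for `N`-Morse geodesics, for the single edge `{a, b}` and its
halfspace containing `b`. -/
def StaysClose (A : EdgeSubgraphs G S T p) (N : ℝ → ℝ) (a b : VT) (D : ℝ) : Prop :=
  (∀ (n : ℕ) (c : ℕ → G), IsGeodSeg (wdist S) n c → MorseSet (wdist S) N (c '' Set.Iic n) →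
    c 0 ∈ A.A a b → c n ∈ A.A a b → ∀ i ≤ n, InNbhd (wdist S) (A.A a b) D (c i)) ∧
  (∀ (n : ℕ) (c : ℕ → G), IsGeodSeg (wdist S) n c → MorseSet (wdist S) N (c '' Set.Iic n) →
    c 0 ∈ hsVerts T p A.A a b → c n ∈ hsVerts T p A.A a b →
    ∀ i ≤ n, InNbhd (wdist S) (hsVerts T p A.A a b) D (c i))

lemma InNbhd.mono {X : Type*} {d : X → X → ℝ} {B : Set X} {r r' : ℝ} {x : X}
    (h : InNbhd d B r x) (hr : r ≤ r') : InNbhd d B r' x :=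
  let ⟨y, hy, hd⟩ := h
  ⟨y, hy, hd.trans hr⟩

lemma StaysClose.mono {A : EdgeSubgraphs G S T p} {N : ℝ → ℝ} {a b : VT} {D D' : ℝ}
    (h : StaysClose A N a b D) (hD : D ≤ D') : StaysClose A N a b D' :=
  ⟨fun n c hc hM h0 hn i hi => (h.1 n c hc hM h0 hn i hi).mono hD,
    fun n c hc hM h0 hn i hi => (h.2 n c hc hM h0 hn i hi).mono hD⟩

lemma isGeodSeg_mul_left {n : ℕ} {c : ℕ → G} (hc : IsGeodSeg (wdist S) n c) (g : G) :
    IsGeodSeg (wdist S) n fun i => g * c i := fun i hi j hj => by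
  rw [wdist_mul_left, hc i hi j hj]

lemma morseSet_mul_left {N : ℝ → ℝ} {n : ℕ} {c : ℕ → G}
    (hM : MorseSet (wdist S) N (c '' Set.Iic n)) (g : G) :
    MorseSet (wdist S) N ((fun i => g * c i) '' Set.Iic n) := by
  intro C hC s t hst α hα hs ht u hu
  have hmem : ∀ y : G, y ∈ (fun i => g * c i) '' Set.Iic n → g⁻¹ * y ∈ c '' Set.Iic n := by
    rintro _ ⟨i, hi, rfl⟩
    exact ⟨i, hi, by simp⟩
  obtain ⟨_, ⟨i, hi, rfl⟩, hd⟩ := hM C hC s t hst (fun u => g⁻¹ * α u)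
    ⟨hα.1, fun s hs t ht => by rw [wdist_mul_left]; exact hα.2 s hs t ht⟩
    (hmem _ hs) (hmem _ ht) u hu
  refine ⟨_, ⟨i, hi, rfl⟩, ?_⟩
  rw [← wdist_mul_left g⁻¹]
  simpa using hd

lemma mem_edge_smul (A : EdgeSubgraphs G S T p) (g x : G) (a b : VT) :
    g * x ∈ A.A (g • a) (g • b) ↔ x ∈ A.A a b := by
  rw [A.equivariant]
  exact ⟨fun ⟨y, hy, h⟩ => by rwa [← mul_left_cancel h], fun h => ⟨x, h, rfl⟩⟩

lemma mem_hsVerts_smul (hact : ActsOnTree G T) (A : EdgeSubgraphs G S T p) (g x : G) (a b : VT) :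
    g * x ∈ hsVerts T p A.A (g • a) (g • b) ↔ x ∈ hsVerts T p A.A a b := by
  simp only [hsVerts, Set.mem_ofPred_eq, mem_edge_smul, mul_smul]
  rw [smul_mem_halfspace_smul hact.1.connected hact.2.1]

lemma StaysClose.smul (hact : ActsOnTree G T) {A : EdgeSubgraphs G S T p} {N : ℝ → ℝ}
    {a b : VT} {D : ℝ} {g : G} (h : StaysClose A N (g • a) (g • b) D) : StaysClose A N a b D := by
  constructor
  · intro n c hc hM h0 hn i hi
    obtain ⟨y, hy, hd⟩ := h.1 n _ (isGeodSeg_mul_left hc g) (morseSet_mul_left hM g)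
      ((mem_edge_smul A g _ a b).2 h0) ((mem_edge_smul A g _ a b).2 hn) i hi
    refine ⟨g⁻¹ * y, (mem_edge_smul A g _ a b).1 (by simpa using hy), ?_⟩
    rw [← wdist_mul_left g]
    simpa using hd
  · intro n c hc hM h0 hn i hi
    obtain ⟨y, hy, hd⟩ := h.2 n _ (isGeodSeg_mul_left hc g) (morseSet_mul_left hM g)
      ((mem_hsVerts_smul hact A g _ a b).2 h0) ((mem_hsVerts_smul hact A g _ a b).2 hn) i hi
    refine ⟨g⁻¹ * y, (mem_hsVerts_smul hact A g _ a b).1 (by simpa using hy), ?_⟩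
    rw [← wdist_mul_left g]
    simpa using hd

/-- An `E`-cocompact set is within bounded distance of any single `E`-orbit. -/
lemma near_orbit {E : Subgroup G} {B : Set G} {F : Finset G}
    (hF : ∀ x ∈ B, ∃ g ∈ E, ∃ f ∈ F, x = g * f) (q : G) :
    ∃ r : ℝ, 0 ≤ r ∧ ∀ x ∈ B, ∃ g ∈ E, wdist S x (g * q) ≤ r := by
  refine ⟨∑ f ∈ F, wdist S f q, Finset.sum_nonneg fun f _ => wdist_nonneg _ _, ?_⟩
  intro x hx
  obtain ⟨g, hg, f, hf, rfl⟩ := hF x hx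
  refine ⟨g, hg, ?_⟩
  rw [wdist_mul_left]
  exact Finset.single_le_sum (f := fun f => wdist S f q) (fun f _ => wdist_nonneg _ _) hf

/-- An `N`-Morse geodesic is uniformly close to `Γ(𝔢)` between any two of its points in `Γ(𝔢)`. -/
lemma near_edge_set (hS : Subgroup.closure S = ⊤) (A : EdgeSubgraphs G S T p) {a b : VT}
    (hab : T.Adj a b) (hE : FGUndistorted S (edgeStab G a b)) (N : ℝ → ℝ) :
    ∃ D : ℝ, ∀ (n : ℕ) (c : ℕ → G), IsGeodSeg (wdist S) n c →
      MorseSet (wdist S) N (c '' Set.Iic n) → ∀ j i k : ℕ, j ≤ i → i ≤ k → k ≤ n →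
      c j ∈ A.A a b → c k ∈ A.A a b → InNbhd (wdist S) (A.A a b) D (c i) := by
  obtain ⟨F, hF⟩ := A.cocpt a b hab
  obtain ⟨r, hr, hr'⟩ := near_orbit (S := S) hF 1
  obtain ⟨D, hD⟩ := near_path_of_morse hS hE N hr
  refine ⟨D + r, ?_⟩
  intro n c hc hM j i k hji hik hk hj hcK
  have hnear : ∀ x ∈ A.A a b, InNbhd (wdist S) (edgeStab G a b : Set G) r x := by
    intro x hx
    obtain ⟨g, hg, h⟩ := hr' x hx
    exact ⟨g, hg, by simpa using h⟩
  obtain ⟨h, hh, hd⟩ := hD n c hc hM j i k hji hik hk (hnear _ hj) (hnear _ hcK)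
  -- Translating `c j` by `E` gives a point of `Γ(𝔢)` that is `r`-close to `h`.
  obtain ⟨g, hg, hgd⟩ := hr' _ hj
  refine ⟨h * g⁻¹ * c j, A.inva a b hab _ (mul_mem hh (inv_mem hg)) _ hj, ?_⟩
  have h1 : wdist S (h * g⁻¹ * c j) h ≤ r := by
    have := wdist_mul_left (S := S) (h * g⁻¹) (c j) (g * 1)
    rw [show h * g⁻¹ * (g * 1) = h by group] at this
    rw [this]
    exact hgd
  have := wdist_triangle hS (c i) h (h * g⁻¹ * c j)
  rw [wdist_comm hS h] at this
  linarith

lemma exists_staysClose (hS : Subgroup.closure S = ⊤) (hact : ActsOnTree G T)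
    (A : EdgeSubgraphs G S T p) {a b : VT} (hab : T.Adj a b)
    (hE : FGUndistorted S (edgeStab G a b)) (N : ℝ → ℝ) :
    ∃ D : ℝ, StaysClose A N a b D := by
  obtain ⟨D, hD⟩ := near_edge_set hS A hab hE N
  obtain ⟨r, hr⟩ : ∃ r : ℝ, 0 ≤ r ∧ ((hsVerts T p A.A a b).Nonempty →
      ∀ x ∈ A.A a b, InNbhd (wdist S) (hsVerts T p A.A a b) r x) := by
    by_cases hne : (hsVerts T p A.A a b).Nonempty
    · obtain ⟨q, hq⟩ := hne
      obtain ⟨F, hF⟩ := A.cocpt a b hab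
      obtain ⟨r, hr, hr'⟩ := near_orbit (S := S) hF q
      refine ⟨r, hr, fun _ x hx => ?_⟩
      obtain ⟨g, hg, hd⟩ := hr' x hx
      refine ⟨g * q, ?_, hd⟩
      have := (mem_hsVerts_smul hact A g q a b).2 hq
      rwa [MulAction.mem_stabilizer_iff.1 hg.1, MulAction.mem_stabilizer_iff.1 hg.2] at this
    · exact ⟨0, le_rfl, fun h => absurd h hne⟩
  refine ⟨max D 0 + r, ?_, ?_⟩
  · intro n c hc hM h0 hn i hi
    exact (hD n c hc hM 0 i n (Nat.zero_le _) hi le_rfl h0 hn).mono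
      ((le_max_left D 0).trans (by linarith [hr.1]))
  · intro n c hc hM h0 hn i hi
    by_cases hmem : c i ∈ hsVerts T p A.A a b
    · refine ⟨_, hmem, ?_⟩
      rw [wdist_self]
      linarith [hr.1, le_max_right D 0]
    obtain ⟨j, k, hji, hik, hk, hj, hcK⟩ :
        ∃ j k, j ≤ i ∧ i ≤ k ∧ k ≤ n ∧ c j ∈ A.A a b ∧ c k ∈ A.A a b := by
      by_cases hiA : c i ∈ A.A a b
      · exact ⟨i, i, le_rfl, le_rfl, hi, hiA, hiA⟩
      have hih : c i • p ∉ halfspace T a b := fun h => hmem ⟨h, hiA⟩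
      obtain ⟨j, hj, hj1, hj2⟩ : ∃ j < i, c j • p ∈ halfspace T a b ∧
          c (j + 1) • p ∉ halfspace T a b := by
        by_contra! hcon
        apply hih
        have : ∀ l ≤ i, c l • p ∈ halfspace T a b := by
          intro l
          induction l with
          | zero => intro _; exact h0.1
          | succ l ih => intro h; exact hcon l (by omega) (ih (by omega))
        exact this i le_rfl
      obtain ⟨k, hik, hk, hk1, hk2⟩ : ∃ k, i ≤ k ∧ k < n ∧ c k • p ∉ halfspace T a b ∧
          c (k + 1) • p ∈ halfspace T a b := by
        by_contra! hcon
        have : ∀ l, i ≤ l → l ≤ n → c l • p ∉ halfspace T a b := by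
          intro l hl
          induction l, hl using Nat.le_induction with
          | base => intro _; exact hih
          | succ l hl ih => intro h; exact hcon l hl (by omega) (ih (by omega))
        exact this n hi le_rfl hn.1
      refine ⟨j, k, hj.le, hik, hk.le, ?_, ?_⟩
      · refine (A.crossing a b hab (c j) (c (j + 1)) ?_ hj1
          ((mem_halfspace_or hact.1 hab _).resolve_left hj2)).1
        rw [hc j (by omega) (j + 1) (by omega)]
        simp
      · refine (A.crossing a b hab (c (k + 1)) (c k) ?_ hk2
          ((mem_halfspace_or hact.1 hab _).resolve_left hk1)).2
        rw [hc (k + 1) (by omega) k (by omega)]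
        simp
    obtain ⟨z, hz, hzd⟩ := hD n c hc hM j i k hji hik hk hj hcK
    obtain ⟨y, hy, hyd⟩ := hr.2 ⟨_, h0⟩ z hz
    refine ⟨y, hy, ?_⟩
    have := wdist_triangle hS (c i) z y
    linarith [le_max_left D 0]

end Edge

/-- **Lemma 4.3** (Statement 12, `stay close to w`).  Under Assumption 4.1 and with edge
subgraphs `Γ(𝔢)` as in the setup, for every Morse gauge `N` there is a constant `D(N)` such
that every `N`-Morse geodesic of `Γ` with endpoints in `Γ(𝔢)` (resp. in `Γ(𝔥)`) is
contained in the `D(N)`-neighbourhood of `Γ(𝔢)` (resp. of `Γ(𝔥)`). -/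
theorem morse_geodesics_stay_close
    {G VT : Type*} [Group G] [MulAction G VT]
    (S : Finset G) (hSgen : Subgroup.closure (S : Set G) = ⊤)
    (T : SimpleGraph VT) (hact : ActsOnTree G T) (p : VT)
    (hedge : ∀ a b : VT, T.Adj a b →
      FGUndistorted (S : Set G) (edgeStab G a b) ∧
      RelMorseEmpty (S : Set G) (edgeStab G a b))
    (A : EdgeSubgraphs G (S : Set G) T p) (N : ℝ → ℝ) :
    ∃ D : ℝ, ∀ a b : VT, T.Adj a b →
      (∀ (n : ℕ) (c : ℕ → G), IsGeodSeg (wdist (S : Set G)) n c →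
        MorseSet (wdist (S : Set G)) N (c '' Set.Iic n) →
        c 0 ∈ A.A a b → c n ∈ A.A a b →
        ∀ i ≤ n, InNbhd (wdist (S : Set G)) (A.A a b) D (c i)) ∧
      (∀ (n : ℕ) (c : ℕ → G), IsGeodSeg (wdist (S : Set G)) n c →
        MorseSet (wdist (S : Set G)) N (c '' Set.Iic n) →
        c 0 ∈ hsVerts T p A.A a b → c n ∈ hsVerts T p A.A a b →
        ∀ i ≤ n, InNbhd (wdist (S : Set G)) (hsVerts T p A.A a b) D (c i)) := by
  obtain ⟨F, hF, hFe⟩ := finite_edge_orbits S hSgen hact p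
  have hex : ∀ e : VT × VT, ∃ D : ℝ, T.Adj e.1 e.2 → StaysClose A N e.1 e.2 D := by
    intro e
    by_cases h : T.Adj e.1 e.2
    · obtain ⟨D, hD⟩ := exists_staysClose hSgen hact A h (hedge _ _ h).1 N
      exact ⟨D, fun _ => hD⟩
    · exact ⟨0, fun h' => absurd h' h⟩
  choose D hD using hex
  obtain ⟨M, hM⟩ := ((hF.prod hF).image D).bddAbove
  refine ⟨M, fun a b hab => ?_⟩
  obtain ⟨g, hga, hgb⟩ := hFe a b hab
  exact ((hD (g • a, g • b) (hact.2.1 g a b hab)).mono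
    (hM ⟨(g • a, g • b), ⟨hga, hgb⟩, rfl⟩)).smul hact

end MorseGoG
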